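/- arXiv:1411.7467 — 3 statements merged into one kernel-verified Lean document; each statement's English description precedes it below -/
import Mathlib

section
/- Let γ ≥ 1/2 be a half-integer, ε ∈ {0, 1/2}, and let j be a real number with 2j ∈ ℤ and j − ε ∉ ℤ. Then for every M ∈ ε + γ + ℤ, the restriction Q_M of the Casimir 𝒬 of F_γ ⊗ C^ε_j to V_M is diagonalizable if and only if j > γ − 1 or j < −γ; consequently 𝒬 is diagonalizable on F_γ ⊗ C^ε_j if and only if j > γ − 1 or j < −γ. -/
/-!
Couplings F_γ ⊗ C^ε_j for sl(2,ℝ).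

Conventions: γ = G/2 with `G : ℕ`, `1 ≤ G`; ε is encoded by `E : ℂ` (with `E = 0 ∨ E = 1/2`);
j ∈ ℂ. The space F_γ ⊗ C^ε_j has basis indexed by `(ν, z) : Fin (G+1) × ℤ`, the basis vector
`single (ν,z) 1` representing |γ, ν-γ⟩ ⊗ |j, ε+z⟩.
-/

noncomputable section

/-- Principal branch of the complex square root. -/
def csqrt (z : ℂ) : ℂ := z ^ ((1 : ℂ) / 2)

/-- C₊(j,m) = i √(j-m) √(j+m+1). -/
def Cp (j m : ℂ) : ℂ := Complex.I * csqrt (j - m) * csqrt (j + m + 1)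

/-- C₋(j,m) = i √(j+m) √(j-m+1). -/
def Cm (j m : ℂ) : ℂ := Complex.I * csqrt (j + m) * csqrt (j - m + 1)

/-- γ = G/2, as a complex number. -/
def gam (G : ℕ) : ℂ := (G : ℂ) / 2

/-- μ = ν - γ for ν : Fin (G+1). -/
def muc (G : ℕ) (ν : Fin (G + 1)) : ℂ := ((ν : ℕ) : ℂ) - gam G

/-- m = ε + z for z : ℤ. -/
def mcont (E : ℂ) (z : ℤ) : ℂ := E + (z : ℂ)

/-- The vector space F_γ ⊗ C^ε_j. -/
abbrev Wc (G : ℕ) := (Fin (G + 1) × ℤ) →₀ ℂ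

/-- Basis vector with coefficient, out-of-range F_γ indices giving 0. -/
def eVc (G : ℕ) (i : ℤ) (z : ℤ) (c : ℂ) : Wc G :=
  if h : 0 ≤ i ∧ i < (G : ℤ) + 1 then
    Finsupp.single ((⟨i.toNat, by omega⟩ : Fin (G + 1)), z) c
  else 0

/-- 𝒥₀ = J₀ ⊗ 1 + 1 ⊗ J₀. -/
def J0c (G : ℕ) (E : ℂ) : Wc G →ₗ[ℂ] Wc G :=
  Finsupp.lsum ℂ fun p => LinearMap.toSpanSingleton ℂ (Wc G)
    (Finsupp.single p (muc G p.1 + mcont E p.2))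

/-- 𝒥₊ = J₊ ⊗ 1 + 1 ⊗ J₊. -/
def Jpc (G : ℕ) (j E : ℂ) : Wc G →ₗ[ℂ] Wc G :=
  Finsupp.lsum ℂ fun p => LinearMap.toSpanSingleton ℂ (Wc G)
    (eVc G ((p.1 : ℕ) + 1) p.2 (Cp (gam G) (muc G p.1)) +
      Finsupp.single (p.1, p.2 + 1) (Cp j (mcont E p.2)))

/-- 𝒥₋ = J₋ ⊗ 1 + 1 ⊗ J₋. -/
def Jmc (G : ℕ) (j E : ℂ) : Wc G →ₗ[ℂ] Wc G :=
  Finsupp.lsum ℂ fun p => LinearMap.toSpanSingleton ℂ (Wc G)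
    (eVc G ((p.1 : ℕ) - 1) p.2 (Cm (gam G) (muc G p.1)) +
      Finsupp.single (p.1, p.2 - 1) (Cm j (mcont E p.2)))

/-- The Casimir 𝒬 = -𝒥₀(𝒥₀+1) + 𝒥₋𝒥₊. -/
def Qc (G : ℕ) (j E : ℂ) : Wc G →ₗ[ℂ] Wc G :=
  -(J0c G E ∘ₗ (J0c G E + LinearMap.id)) + Jmc G j E ∘ₗ Jpc G j E

/-- The 𝒥₀-eigenvalue-M subspace V_M of F_γ ⊗ C^ε_j for M = ε + γ + M₀, M₀ : ℤ:
spanned by the |γ,ν-γ⟩⊗|j,ε+z⟩ with (ν-γ) + (ε+z) = M, i.e. z = G + M₀ - ν. -/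
def VMc (G : ℕ) (M₀ : ℤ) : Submodule ℂ (Wc G) :=
  Submodule.span ℂ
    {w : Wc G | ∃ ν : Fin (G + 1), w = Finsupp.single (ν, (G : ℤ) + M₀ - (ν : ℕ)) 1}

/-- q_(μ) = -(j+μ)(j+μ+1) with μ = t - γ. -/
def qc (G : ℕ) (j : ℂ) (t : Fin (G + 1)) : ℂ :=
  -((j + muc G t) * (j + muc G t + 1))

/-- A linear operator is diagonalizable on an invariant subspace `p` iff `p` is spanned by
eigenvectors of the operator lying in `p`. -/
def DiagOn {V : Type*} [AddCommGroup V] [Module ℂ V]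
    (f : V →ₗ[ℂ] V) (p : Submodule ℂ V) : Prop :=
  Submodule.span ℂ {w : V | w ∈ p ∧ ∃ c : ℂ, f w = c • w} = p

/-!
Up to rescaling, the vector `|γ, γ - i⟩ ⊗ |j, ε + M₀ + i⟩` behaves under the Casimir operator like
the monomial `s ^ (2γ - i) t ^ i x ^ (j + ε + M₀ + i) y ^ (j - ε - M₀ - i)`; the hypotheses on `j`
make all rescaling factors nonzero. Multiplication by the invariant `x t - y s` commutes with the
Casimir operator and takes differences of neighbouring monomials, so on the iterated differences of
the rescaled basis the Casimir operator is bidiagonal, with diagonal entries the numbers `q_(μ)` and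
nonzero subdiagonal entries. Such an operator is cyclic, hence diagonalizable exactly when its
diagonal entries are distinct. Two numbers `q_(μ)` and `q_(μ')` with `μ ≠ μ'` coincide if and only
if `μ + μ' = -2j - 1`, and this happens for some `μ`, `μ'` exactly when `2j` is an integer with
`-2γ ≤ 2j ≤ 2γ - 2`.
-/

/-! ### Diagonalizability on an invariant subspace -/

section Diagonalizability

open Module.End

variable {K V : Type*} [Field K] [AddCommGroup V] [Module K V]

-- The components of a vector of `p` along the eigenspaces of `f` become eigenvectors (or `0`) of
-- the induced operator on `V ⧸ p` whose sum is zero, so each of them vanishes there.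
lemma inf_iSup_eigenspace {f : V →ₗ[K] V} {p : Submodule K V} (hp : ∀ x ∈ p, f x ∈ p) :
    p ⊓ ⨆ μ, eigenspace f μ = ⨆ μ, p ⊓ eigenspace f μ := by
  refine le_antisymm ?_
    (le_inf (iSup_le fun _ => inf_le_left) (iSup_mono fun _ => inf_le_right))
  rintro _ ⟨hx, hx'⟩
  obtain ⟨y, hy, rfl⟩ := (Submodule.mem_iSup_iff_exists_finsupp _ _).1 hx'
  let fbar : Module.End K (V ⧸ p) := p.mapQ p f hp
  have hbar : ∀ μ, p.mkQ (y μ) ∈ eigenspace fbar μ := fun μ => by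
    rw [mem_eigenspace_iff, Submodule.mkQ_apply, Submodule.mapQ_apply,
      mem_eigenspace_iff.1 (hy μ), Submodule.Quotient.mk_smul]
  have hsum : ∑ μ ∈ y.support, p.mkQ (y μ) = 0 := by
    rw [← map_sum]
    exact (Submodule.Quotient.mk_eq_zero p).2 hx
  have hzero := (iSupIndep_iff_finsetSum_eq_zero_imp_eq_zero _).1 (eigenspaces_iSupIndep fbar)
    y.support (fun μ => p.mkQ (y μ)) (fun μ _ => hbar μ) hsum
  exact Submodule.sum_mem _ fun μ hμ => Submodule.mem_iSup_of_mem μ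
    ⟨(Submodule.Quotient.mk_eq_zero p).1 (hzero μ hμ), hy μ⟩

lemma finrank_le_card_of_cyclic_of_iSup_eigenspace_eq_top {f : V →ₗ[K] V} {v : V} {S : Finset K}
    (hv : ∀ p : Submodule K V, (∀ x ∈ p, f x ∈ p) → v ∈ p → p = ⊤)
    (hf : ⨆ μ, eigenspace f μ = ⊤) (hS : ∀ μ, HasEigenvalue f μ → μ ∈ S) :
    Module.finrank K V ≤ S.card := by
  classical
  obtain ⟨y, hy, hyv⟩ := (Submodule.mem_iSup_iff_exists_finsupp _ _).1
    (hf ▸ Submodule.mem_top : v ∈ ⨆ μ, eigenspace f μ)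
  have hyS : ∀ μ ∈ y.support, μ ∈ S := fun μ hμ =>
    hS μ (hasEigenvalue_of_hasEigenvector ⟨hy μ, Finsupp.mem_support_iff.1 hμ⟩)
  have hspan : Submodule.span K (S.image y : Set V) = ⊤ := by
    refine hv _ (fun x hx => ?_) ?_
    · refine Submodule.span_le (p := (Submodule.span K (S.image y : Set V)).comap f).2 ?_ hx
      intro z hz
      obtain ⟨μ, -, rfl⟩ := Finset.mem_image.1 hz
      rw [SetLike.mem_coe, Submodule.mem_comap, mem_eigenspace_iff.1 (hy μ)]
      exact Submodule.smul_mem _ _ (Submodule.subset_span hz)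
    · rw [← hyv]
      exact Submodule.sum_mem _ fun μ hμ =>
        Submodule.subset_span (Finset.mem_image_of_mem y (hyS μ hμ))
  calc Module.finrank K V = Module.finrank K (Submodule.span K (S.image y : Set V)) := by
        rw [hspan, finrank_top]
    _ ≤ (S.image y).card := finrank_span_finset_le_card _
    _ ≤ S.card := Finset.card_image_le

lemma iSup_eigenspace_eq_top_of_card_eq_finrank {ι : Type*} [Fintype ι] [FiniteDimensional K V]
    {f : V →ₗ[K] V} {q : ι → K} (hq : Function.Injective q) (hf : ∀ i, HasEigenvalue f (q i))
    (hcard : Fintype.card ι = Module.finrank K V) : ⨆ μ, eigenspace f μ = ⊤ := by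
  choose x hx using fun i => (hf i).exists_hasEigenvector
  have hli : LinearIndependent K x := eigenvectors_linearIndependent' f q hq x hx
  rw [eq_top_iff, ← hli.span_eq_top_of_card_eq_finrank' hcard, Submodule.span_le]
  rintro _ ⟨i, rfl⟩
  exact Submodule.mem_iSup_of_mem (q i) (hx i).1

end Diagonalizability

section DiagOn

open Module.End

variable {V : Type*} [AddCommGroup V] [Module ℂ V] {f : V →ₗ[ℂ] V} {p : Submodule ℂ V}

lemma diagOn_iff_iSup_inf_eigenspace : DiagOn f p ↔ ⨆ μ, p ⊓ eigenspace f μ = p := by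
  rw [DiagOn, Submodule.iSup_eq_span]
  suffices {w : V | w ∈ p ∧ ∃ c : ℂ, f w = c • w} = ⋃ μ, ↑(p ⊓ eigenspace f μ) by rw [this]
  ext w
  simp

lemma diagOn_iff_le_iSup_eigenspace (hp : ∀ x ∈ p, f x ∈ p) :
    DiagOn f p ↔ p ≤ ⨆ μ, eigenspace f μ := by
  rw [diagOn_iff_iSup_inf_eigenspace, ← inf_iSup_eigenspace hp, inf_eq_left]

lemma diagOn_iff_iSup_eigenspace_restrict (hp : ∀ x ∈ p, f x ∈ p) :
    DiagOn f p ↔ ⨆ μ, eigenspace (f.restrict hp) μ = ⊤ := by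
  have hinf : ∀ μ, p ⊓ eigenspace f μ = (eigenspace (f.restrict hp) μ).map p.subtype :=
    fun _ => Submodule.inf_genEigenspace f p hp
  rw [diagOn_iff_iSup_inf_eigenspace]
  simp only [hinf]
  rw [← Submodule.map_iSup, ← (Submodule.map_injective_of_injective p.injective_subtype).eq_iff,
    Submodule.map_subtype_top]

lemma diagOn_top_iff_of_iSup_eq_top {ι : Type*} {p : ι → Submodule ℂ V}
    (hp : ∀ i, ∀ x ∈ p i, f x ∈ p i) (htop : ⨆ i, p i = ⊤) :
    DiagOn f ⊤ ↔ ∀ i, DiagOn f (p i) := by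
  rw [diagOn_iff_le_iSup_eigenspace fun _ _ => Submodule.mem_top, ← htop, iSup_le_iff]
  exact forall_congr' fun i => (diagOn_iff_le_iSup_eigenspace (hp i)).symm

end DiagOn

/-! ### Bidiagonal operators -/

section Bidiagonal

open Module Module.End Polynomial

variable {K V : Type*} [Field K] [AddCommGroup V] [Module K V] {n : ℕ} {f : V →ₗ[K] V}
  {q : Fin (n + 1) → K} {c : Fin n → K}

/-- `f` is lower bidiagonal on the family `w`, with diagonal `q` and subdiagonal `c`. -/
structure IsBidiagonal (f : V →ₗ[K] V) (w : Fin (n + 1) → V) (q : Fin (n + 1) → K)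
    (c : Fin n → K) : Prop where
  apply_castSucc (k : Fin n) : f (w k.castSucc) = q k.castSucc • w k.castSucc + c k • w k.succ
  apply_last : f (w (Fin.last n)) = q (Fin.last n) • w (Fin.last n)

namespace IsBidiagonal

lemma apply_mem_span {w : Fin (n + 1) → V} (h : IsBidiagonal f w q c) :
    ∀ x ∈ Submodule.span K (Set.range w), f x ∈ Submodule.span K (Set.range w) := by
  have hw : ∀ k, w k ∈ Submodule.span K (Set.range w) := fun k => Submodule.subset_span ⟨k, rfl⟩
  change _ ≤ (Submodule.span K (Set.range w)).comap f
  rw [Submodule.span_le]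
  rintro _ ⟨k, rfl⟩
  rw [SetLike.mem_coe, Submodule.mem_comap]
  refine Fin.lastCases ?_ (fun k => ?_) k
  · rw [h.apply_last]
    exact Submodule.smul_mem _ _ (hw _)
  · rw [h.apply_castSucc]
    exact Submodule.add_mem _ (Submodule.smul_mem _ _ (hw _)) (Submodule.smul_mem _ _ (hw _))

variable {b : Basis (Fin (n + 1)) K V}

lemma repr_apply_of_lt (h : IsBidiagonal f b q c) {i k : Fin (n + 1)} (hik : i < k) :
    b.repr (f (b k)) i = 0 := by
  induction k using Fin.lastCases with
  | last => simp [h.apply_last, hik.ne']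
  | cast k => simp [h.apply_castSucc, hik.ne', (hik.trans k.castSucc_lt_succ).ne']

lemma repr_apply_self (h : IsBidiagonal f b q c) (k : Fin (n + 1)) :
    b.repr (f (b k)) k = q k := by
  induction k using Fin.lastCases with
  | last => simp [h.apply_last]
  | cast k => simp [h.apply_castSucc, k.castSucc_lt_succ.ne']

lemma charpoly_eq [Module.Finite K V] (h : IsBidiagonal f b q c) :
    f.charpoly = ∏ k, (X - C (q k)) := by
  have htri : (LinearMap.toMatrix b b f).transpose.IsUpperTriangular := fun k i hik => by
    rw [Matrix.transpose_apply, LinearMap.toMatrix_apply]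
    exact h.repr_apply_of_lt hik
  rw [← LinearMap.charpoly_toMatrix f b, ← Matrix.charpoly_transpose,
    Matrix.charpoly_of_isUpperTriangular _ htri]
  simp only [Matrix.transpose_apply, LinearMap.toMatrix_apply, h.repr_apply_self]

lemma hasEigenvalue_iff (h : IsBidiagonal f b q c) {μ : K} :
    HasEigenvalue f μ ↔ ∃ k, q k = μ := by
  have := Module.Finite.of_basis b
  rw [hasEigenvalue_iff_isRoot_charpoly, h.charpoly_eq, isRoot_prod]
  simp [sub_eq_zero, eq_comm]

lemma eq_top_of_apply_zero_mem (h : IsBidiagonal f b q c) (hc : ∀ k, c k ≠ 0)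
    {p : Submodule K V} (hp : ∀ x ∈ p, f x ∈ p) (h0 : b 0 ∈ p) : p = ⊤ := by
  have hb : ∀ k, b k ∈ p := by
    intro k
    induction k using Fin.induction with
    | zero => exact h0
    | succ k ih =>
      rw [← Submodule.smul_mem_iff p (hc k),
        show c k • b k.succ = f (b k.castSucc) - q k.castSucc • b k.castSucc by
          rw [h.apply_castSucc, add_sub_cancel_left]]
      exact p.sub_mem (hp _ ih) (p.smul_mem _ ih)
  rw [eq_top_iff, ← b.span_eq, Submodule.span_le]
  rintro _ ⟨k, rfl⟩
  exact hb k

lemma iSup_eigenspace_eq_top_iff (h : IsBidiagonal f b q c) (hc : ∀ k, c k ≠ 0) :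
    ⨆ μ, eigenspace f μ = ⊤ ↔ Function.Injective q := by
  classical
  have := Module.Finite.of_basis b
  have hdim : Fintype.card (Fin (n + 1)) = finrank K V := (finrank_eq_card_basis b).symm
  refine ⟨fun htop => ?_, fun hq =>
    iSup_eigenspace_eq_top_of_card_eq_finrank hq (fun k => h.hasEigenvalue_iff.2 ⟨k, rfl⟩) hdim⟩
  have hcard : finrank K V ≤ (Finset.univ.image q).card :=
    finrank_le_card_of_cyclic_of_iSup_eigenspace_eq_top
      (fun _ hp h0 => h.eq_top_of_apply_zero_mem hc hp h0) htop fun μ hμ => by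
        simpa using h.hasEigenvalue_iff.1 hμ
  rw [← Set.injOn_univ, ← Finset.coe_univ]
  exact Finset.card_image_iff.1 (le_antisymm Finset.card_image_le (hdim.trans_le hcard))

end IsBidiagonal

theorem IsBidiagonal.diagOn_span_iff {V : Type*} [AddCommGroup V] [Module ℂ V] {f : V →ₗ[ℂ] V}
    {w : Fin (n + 1) → V} {q : Fin (n + 1) → ℂ} {c : Fin n → ℂ} (h : IsBidiagonal f w q c)
    (hw : LinearIndependent ℂ w) (hc : ∀ k, c k ≠ 0) :
    DiagOn f (Submodule.span ℂ (Set.range w)) ↔ Function.Injective q := by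
  let b := Basis.span hw
  have hb : ∀ k, (b k : V) = w k := fun k => congrArg Subtype.val (Basis.span_apply hw k)
  have hres : IsBidiagonal (f.restrict h.apply_mem_span) b q c :=
    ⟨fun k => Subtype.ext (by simp [hb, h.apply_castSucc]),
      Subtype.ext (by simp [hb, h.apply_last])⟩
  rw [diagOn_iff_iSup_eigenspace_restrict h.apply_mem_span, hres.iSup_eigenspace_eq_top_iff hc]

end Bidiagonal

/-! ### Casimir recursions and iterated differences -/

section CasimirRecursion

variable {K V : Type*} [Field K] [AddCommGroup V] [Module K V] {f : V →ₗ[K] V} {e : ℕ → V}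
  {n : ℕ} {κ a b : K}

/-- `f` acts on `e 0, …, e n` as the Casimir operator acts on the monomials
`s ^ (n - i) * t ^ i * x ^ (a + i) * y ^ (b - i)` of the product of two `sl₂`-representations,
up to the choice of the constant `κ`. At `i = 0` and `i = n` the terms outside the range have
coefficient `0`. -/
def HasCasimirAction (f : V →ₗ[K] V) (e : ℕ → V) (n : ℕ) (κ a b : K) : Prop :=
  ∀ i ≤ n, f (e i) = -(κ + i * (n - i + 1) + (b - i) * (a + i + 1)) • e i
    - (i * (a + i)) • e (i - 1) - ((b - i) * (n - i)) • e (i + 1)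

namespace HasCasimirAction

-- On the monomials, `e (i + 1) - e i` is the invariant `x * t - y * s` times the monomial with
-- parameters `n`, `a`, `b - 1`, and multiplication by an invariant commutes with the Casimir
-- operator.
protected lemma fwdDiff (h : HasCasimirAction f e (n + 1) κ a b) :
    HasCasimirAction f (fwdDiff 1 e) n κ a (b - 1) := by
  intro i hi
  rw [fwdDiff, map_sub, h (i + 1) (by lia), h i (by lia)]
  rcases i with _ | i
  · simp only [fwdDiff, Nat.cast_zero, Nat.cast_add, Nat.cast_one, Nat.zero_add,
      Nat.zero_sub, Nat.sub_self]
    module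
  · simp only [fwdDiff, Nat.cast_add, Nat.cast_one, Nat.add_sub_cancel]
    module

lemma fwdDiff_iter (k : ℕ) (h : HasCasimirAction f e (n + k) κ a b) :
    HasCasimirAction f ((fwdDiff 1)^[k] e) n κ a (b - k) := by
  induction k generalizing n with
  | zero => simpa using h
  | succ k ih =>
    rw [Function.iterate_succ_apply', Nat.cast_succ, ← sub_sub]
    exact (ih (n := n + 1) (by rwa [Nat.add_right_comm, Nat.add_assoc])).fwdDiff

lemma apply_fwdDiff_iter_zero (h : HasCasimirAction f e n κ a b) {k : ℕ} (hk : k ≤ n) :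
    f ((fwdDiff 1)^[k] e 0) = -(κ + (b - k) * (a + 1 + n - k)) • (fwdDiff 1)^[k] e 0
      + -((b - k) * (n - k)) • (fwdDiff 1)^[k + 1] e 0 := by
  obtain ⟨m, rfl⟩ := Nat.exists_eq_add_of_le' hk
  rw [h.fwdDiff_iter k 0 (Nat.zero_le m), Function.iterate_succ_apply', fwdDiff]
  push_cast
  module

lemma isBidiagonal_fwdDiff_iter (h : HasCasimirAction f e n κ a b) :
    IsBidiagonal f (fun k : Fin (n + 1) => (fwdDiff 1)^[k] e 0)
      (fun k => -(κ + (b - k) * (a + 1 + n - k))) fun k => -((b - k) * (n - k)) where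
  apply_castSucc k := h.apply_fwdDiff_iter_zero k.is_le'
  apply_last := by simpa using h.apply_fwdDiff_iter_zero le_rfl

end HasCasimirAction

lemma span_fwdDiff_iter_zero {R : Type*} [Ring R] [Module R V] (e : ℕ → V) (n : ℕ) :
    Submodule.span R (Set.range fun k : Fin (n + 1) => (fwdDiff 1)^[k] e 0)
      = Submodule.span R (Set.range fun k : Fin (n + 1) => e k) := by
  refine le_antisymm (Submodule.span_le.2 ?_) (Submodule.span_le.2 ?_) <;> rintro _ ⟨k, rfl⟩
  · simp only [fwdDiff_iter_eq_sum_shift, zero_add, smul_eq_mul, mul_one]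
    refine Submodule.sum_mem _ fun i hi => zsmul_mem (Submodule.subset_span ?_) _
    exact ⟨⟨i, (Finset.mem_range.1 hi).trans_le k.is_lt⟩, rfl⟩
  · have hnewton : e k = ∑ i ∈ Finset.range (k + 1), (k : ℕ).choose i • (fwdDiff 1)^[i] e 0 := by
      simpa using shift_eq_sum_fwdDiff_iter 1 e k 0
    simp only [SetLike.mem_coe, hnewton]
    refine Submodule.sum_mem _ fun i hi => nsmul_mem (Submodule.subset_span ?_) _
    exact ⟨⟨i, (Finset.mem_range.1 hi).trans_le k.is_lt⟩, rfl⟩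

lemma linearIndependent_fwdDiff_iter_zero (he : LinearIndependent K fun k : Fin (n + 1) => e k) :
    LinearIndependent K fun k : Fin (n + 1) => (fwdDiff 1)^[k] e 0 := by
  rw [linearIndependent_iff_card_eq_finrank_span, Set.finrank] at he ⊢
  rwa [span_fwdDiff_iter_zero]

theorem HasCasimirAction.diagOn_span_iff {V : Type*} [AddCommGroup V] [Module ℂ V]
    {f : V →ₗ[ℂ] V} {e : ℕ → V} {κ a b : ℂ} (h : HasCasimirAction f e n κ a b)
    (he : LinearIndependent ℂ fun k : Fin (n + 1) => e k) (hb : ∀ k : ℕ, k < n → b ≠ k) :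
    DiagOn f (Submodule.span ℂ (Set.range fun k : Fin (n + 1) => e k)) ↔
      Function.Injective fun k : Fin (n + 1) => -(κ + (b - k) * (a + 1 + n - k)) := by
  rw [← span_fwdDiff_iter_zero]
  refine h.isBidiagonal_fwdDiff_iter.diagOn_span_iff (linearIndependent_fwdDiff_iter_zero he)
    fun k => neg_ne_zero.2 (mul_ne_zero (sub_ne_zero.2 (hb k k.is_lt)) (sub_ne_zero.2 ?_))
  exact_mod_cast k.is_lt.ne'

end CasimirRecursion

-- Up to a rescaling of the basis, only the products of opposite off-diagonal entries of a
-- tridiagonal operator matter.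
lemma exists_rescaling {K : Type*} [Field K] {n : ℕ} {u v u' v' : ℕ → K}
    (huv : ∀ i < n, u i * v i = u' i * v' i) (hne : ∀ i < n, u' i * v' i ≠ 0) :
    ∃ d : ℕ → K, (∀ i ≤ n, d i ≠ 0) ∧
      ∀ i < n, d i * u i = u' i * d (i + 1) ∧ d (i + 1) * v i = v' i * d i := by
  have hu : ∀ i < n, u i ≠ 0 := fun i hi => left_ne_zero_of_mul (huv i hi ▸ hne i hi)
  have hu' : ∀ i < n, u' i ≠ 0 := fun i hi => left_ne_zero_of_mul (hne i hi)
  refine ⟨fun i => ∏ l ∈ Finset.range i, u l / u' l, fun i hi => Finset.prod_ne_zero_iff.2 ?_,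
    fun i hi => ?_⟩
  · intro l hl
    have hln : l < n := (Finset.mem_range.1 hl).trans_le hi
    exact div_ne_zero (hu l hln) (hu' l hln)
  · have := hu' i hi
    simp only [Finset.prod_range_succ]
    constructor
    · field_simp
    · field_simp
      linear_combination (∏ l ∈ Finset.range i, u l / u' l) * huv i hi

/-! ### The Casimir operator on the product basis -/

lemma csqrt_mul_self (z : ℂ) : csqrt z * csqrt z = z := by
  rw [csqrt, ← pow_two, one_div]
  exact_mod_cast Complex.cpow_nat_inv_pow z two_ne_zero

lemma csqrt_zero : csqrt 0 = 0 := by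
  rw [csqrt, Complex.zero_cpow (by norm_num)]

lemma Cp_self_neg_sub_one (j : ℂ) : Cp j (-j - 1) = 0 := by
  rw [Cp, show j + (-j - 1) + 1 = 0 by ring, csqrt_zero, mul_zero]

lemma Cp_self (j : ℂ) : Cp j j = 0 := by
  rw [Cp, sub_self, csqrt_zero, mul_zero, zero_mul]

lemma Cm_self_add_one (j : ℂ) : Cm j (j + 1) = 0 := by
  rw [Cm, show j - (j + 1) + 1 = 0 by ring, csqrt_zero, mul_zero]

lemma Cp_mul_Cm (j m : ℂ) : Cp j m * Cm j (m + 1) = -((j - m) * (j + m + 1)) := by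
  rw [Cp, Cm, show j - (m + 1) + 1 = j - m by ring, ← add_assoc]
  linear_combination (csqrt (j - m) * csqrt (j - m)) * (csqrt (j + m + 1) * csqrt (j + m + 1))
    * Complex.I_mul_I - csqrt (j + m + 1) * csqrt (j + m + 1) * csqrt_mul_self (j - m)
    - (j - m) * csqrt_mul_self (j + m + 1)

lemma natCast_eq_two_mul_gam (G : ℕ) : (G : ℂ) = 2 * gam G := by
  rw [gam]
  ring

/-- The basis vector `|γ, i - γ⟩ ⊗ |j, ε + z⟩`, for an arbitrary integer `i`: it is `0` when `i` is
out of range. -/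
def ket (G : ℕ) (i z : ℤ) : Wc G := eVc G i z 1

lemma eVc_eq_smul_ket (G : ℕ) (i z : ℤ) (c : ℂ) : eVc G i z c = c • ket G i z := by
  unfold ket eVc
  split_ifs <;> simp

lemma ket_natCast (G : ℕ) (ν : Fin (G + 1)) (z : ℤ) :
    ket G (ν : ℕ) z = Finsupp.single (ν, z) 1 := by
  rw [ket, eVc, dif_pos (by omega)]
  simp

lemma single_eq_smul_ket (G : ℕ) (ν : Fin (G + 1)) (z : ℤ) (c : ℂ) :
    (Finsupp.single (ν, z) c : Wc G) = c • ket G (ν : ℕ) z := by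
  simp [ket_natCast]

lemma ket_eq_zero {G : ℕ} {i : ℤ} (hi : i < 0 ∨ G < i) (z : ℤ) : ket G i z = 0 := by
  rw [ket, eVc, dif_neg (by lia)]

lemma eq_natCast_or_out_of_range (G : ℕ) (i : ℤ) :
    (∃ ν : Fin (G + 1), i = (ν : ℕ)) ∨ i < 0 ∨ G < i := by
  by_cases hi : i < 0 ∨ (G : ℤ) < i
  · exact Or.inr hi
  · exact Or.inl ⟨⟨i.toNat, by lia⟩, by lia⟩

lemma J0c_ket (G : ℕ) (E : ℂ) (i z : ℤ) :
    J0c G E (ket G i z) = (i - gam G + (E + z)) • ket G i z := by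
  obtain ⟨ν, rfl⟩ | hi := eq_natCast_or_out_of_range G i
  · simp [ket_natCast, J0c, muc, mcont]
  · simp [ket_eq_zero hi]

lemma Jpc_ket (G : ℕ) (j E : ℂ) (i z : ℤ) :
    Jpc G j E (ket G i z) = Cp (gam G) (i - gam G) • ket G (i + 1) z
      + Cp j (E + z) • ket G i (z + 1) := by
  obtain ⟨ν, rfl⟩ | hi := eq_natCast_or_out_of_range G i
  · rw [ket_natCast, ← single_eq_smul_ket, ← eVc_eq_smul_ket]
    simp [Jpc, muc, mcont]
  · have hraise : Cp (gam G) (i - gam G) • ket G (i + 1) z = 0 := by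
      obtain rfl | hi' := eq_or_ne i (-1)
      · rw [show ((-1 : ℤ) : ℂ) - gam G = -gam G - 1 by push_cast; ring, Cp_self_neg_sub_one,
          zero_smul]
      · rw [ket_eq_zero (by lia), smul_zero]
    rw [hraise, ket_eq_zero hi, ket_eq_zero hi, map_zero, smul_zero, add_zero]

lemma Jmc_ket (G : ℕ) (j E : ℂ) (i z : ℤ) :
    Jmc G j E (ket G i z) = Cm (gam G) (i - gam G) • ket G (i - 1) z
      + Cm j (E + z) • ket G i (z - 1) := by
  obtain ⟨ν, rfl⟩ | hi := eq_natCast_or_out_of_range G i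
  · rw [ket_natCast, ← single_eq_smul_ket, ← eVc_eq_smul_ket]
    simp [Jmc, muc, mcont]
  · have hlower : Cm (gam G) (i - gam G) • ket G (i - 1) z = 0 := by
      obtain rfl | hi' := eq_or_ne i (G + 1)
      · rw [show ((G + 1 : ℤ) : ℂ) - gam G = gam G + 1 by
          push_cast [natCast_eq_two_mul_gam]; ring, Cm_self_add_one, zero_smul]
      · rw [ket_eq_zero (by lia), smul_zero]
    rw [hlower, ket_eq_zero hi, ket_eq_zero hi, map_zero, smul_zero, add_zero]

/-- The vector `|γ, γ - i⟩ ⊗ |j, ε + M₀ + i⟩` of weight `M = ε + γ + M₀`. Counting from the highest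
weight of `F_γ` makes `i` the exponent in `HasCasimirAction`. -/
def weightKet (G : ℕ) (M₀ i : ℤ) : Wc G := ket G (G - i) (M₀ + i)

lemma Qc_weightKet (G : ℕ) (j E : ℂ) (M₀ i : ℤ) :
    Qc G j E (weightKet G M₀ i) =
      -((E + gam G + M₀) * (E + gam G + M₀ + 1) + i * (G - i + 1)
          + (j - E - M₀ - i) * (j + E + M₀ + i + 1)) • weightKet G M₀ i
      + (Cp (gam G) (gam G - i) * Cm j (E + M₀ + i)) • weightKet G M₀ (i - 1)
      + (Cp j (E + M₀ + i) * Cm (gam G) (gam G - i)) • weightKet G M₀ (i + 1) := by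
  have hg := natCast_eq_two_mul_gam G
  have hγ : Cp (gam G) (gam G - i) * Cm (gam G) (gam G - i + 1) = -(i * (G - i + 1)) := by
    rw [Cp_mul_Cm, hg]
    ring
  have hj : Cp j (E + M₀ + i) * Cm j (E + M₀ + i + 1)
      = -((j - E - M₀ - i) * (j + E + M₀ + i + 1)) := by
    rw [Cp_mul_Cm]
    ring
  have hdown : ket G (G - i + 1) (M₀ + i - 1) = weightKet G M₀ (i - 1) := by
    rw [weightKet, ← sub_add, add_sub_assoc]
  have hup : ket G (G - i - 1) (M₀ + i + 1) = weightKet G M₀ (i + 1) := by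
    rw [weightKet, sub_add_eq_sub_sub, add_assoc]
  rw [weightKet]
  simp only [Qc, LinearMap.add_apply, LinearMap.neg_apply, LinearMap.comp_apply,
    LinearMap.id_apply, J0c_ket, Jpc_ket, map_add, map_smul, Jmc_ket, add_sub_cancel_right,
    hdown, hup]
  push_cast
  rw [show (G : ℂ) - i - gam G = gam G - i by rw [hg]; ring,
    show (G : ℂ) - i + 1 - gam G = gam G - i + 1 by rw [hg]; ring,
    show E + ((M₀ : ℂ) + i) = E + M₀ + i by ring,
    show E + ((M₀ : ℂ) + i + 1) = E + M₀ + i + 1 by ring]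
  linear_combination (norm := module) (hγ + hj) • ket G (G - i) (M₀ + i)

/-! ### The weight spaces -/

lemma weightKet_natCast (G : ℕ) (M₀ : ℤ) (k : Fin (G + 1)) :
    weightKet G M₀ (k : ℕ) = Finsupp.single (k.rev, M₀ + (k : ℕ)) 1 := by
  rw [weightKet, ← ket_natCast, Fin.val_rev, Nat.cast_sub (by lia)]
  congr 1
  push_cast
  ring

lemma linearIndependent_weightKet (G : ℕ) (M₀ : ℤ) :
    LinearIndependent ℂ fun k : Fin (G + 1) => weightKet G M₀ (k : ℕ) := by
  simp only [weightKet_natCast]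
  exact (Finsupp.linearIndependent_single_one ℂ _).comp
    (fun k : Fin (G + 1) => (k.rev, M₀ + ((k : ℕ) : ℤ)))
    fun _ _ h => Fin.rev_injective (congrArg Prod.fst h)

lemma VMc_eq_span_weightKet (G : ℕ) (M₀ : ℤ) :
    VMc G M₀ = Submodule.span ℂ (Set.range fun k : Fin (G + 1) => weightKet G M₀ (k : ℕ)) := by
  rw [VMc]
  congr 1
  ext w
  rw [Set.mem_range, Fin.revPerm.surjective.exists]
  refine exists_congr fun k => ?_
  have hz : (G : ℤ) + M₀ - (k : ℕ) = M₀ + (k.rev : ℕ) := by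
    rw [Fin.val_rev]
    omega
  rw [weightKet_natCast, Fin.revPerm_apply, Fin.rev_rev, hz, eq_comm]

lemma weightKet_mem_VMc (G : ℕ) (M₀ i : ℤ) : weightKet G M₀ i ∈ VMc G M₀ := by
  obtain ⟨k, rfl⟩ | hi := eq_natCast_or_out_of_range G i
  · rw [VMc_eq_span_weightKet]
    exact Submodule.subset_span ⟨k, rfl⟩
  · rw [weightKet, ket_eq_zero (by lia)]
    exact Submodule.zero_mem _

lemma Qc_mem_VMc {G : ℕ} (j E : ℂ) {M₀ : ℤ} : ∀ x ∈ VMc G M₀, Qc G j E x ∈ VMc G M₀ := by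
  change VMc G M₀ ≤ (VMc G M₀).comap (Qc G j E)
  rw [VMc_eq_span_weightKet, Submodule.span_le, ← VMc_eq_span_weightKet]
  rintro _ ⟨k, rfl⟩
  rw [SetLike.mem_coe, Submodule.mem_comap, Qc_weightKet]
  have hmem := fun i c => Submodule.smul_mem _ c (weightKet_mem_VMc G M₀ i)
  exact Submodule.add_mem _ (Submodule.add_mem _ (hmem _ _) (hmem _ _)) (hmem _ _)

lemma iSup_VMc (G : ℕ) : ⨆ M₀, VMc G M₀ = ⊤ := by
  rw [eq_top_iff, ← Finsupp.basisSingleOne.span_eq, Submodule.span_le]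
  rintro _ ⟨⟨ν, z⟩, rfl⟩
  refine Submodule.mem_iSup_of_mem (z + (ν : ℕ) - G) (Submodule.subset_span ⟨ν, ?_⟩)
  simp

lemma diagOn_Qc_top_iff (G : ℕ) (j E : ℂ) :
    DiagOn (Qc G j E) ⊤ ↔ ∀ M₀, DiagOn (Qc G j E) (VMc G M₀) :=
  diagOn_top_iff_of_iSup_eq_top (fun _ => Qc_mem_VMc j E) (iSup_VMc G)

/-! ### Diagonalizability on a weight space -/

lemma exists_weightKet_rescaling (G : ℕ) {j E : ℂ} (M₀ : ℤ) (hsub : ∀ n : ℤ, j - E ≠ n)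
    (hadd : ∀ n : ℤ, j + E ≠ n) :
    ∃ d : ℕ → ℂ, (∀ i ≤ G, d i ≠ 0) ∧ ∀ i < G,
      d i * (Cp j (E + M₀ + i) * Cm (gam G) (gam G - i))
        = -((j - E - M₀ - i) * (G - i)) * d (i + 1) ∧
      d (i + 1) * (Cp (gam G) (gam G - (i + 1)) * Cm j (E + M₀ + i + 1))
        = -((i + 1) * (j + E + M₀ + i + 1)) * d i := by
  refine exists_rescaling (fun i _ => ?_) fun i hi => ?_
  · have hγ := Cp_mul_Cm (gam G) (gam G - (i + 1))
    rw [show gam G - ((i : ℂ) + 1) + 1 = gam G - i by ring] at hγ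
    rw [natCast_eq_two_mul_gam G]
    linear_combination Cp (gam G) (gam G - (i + 1)) * Cm (gam G) (gam G - i) *
      Cp_mul_Cm j (E + M₀ + i) - (j - (E + M₀ + i)) * (j + (E + M₀ + i) + 1) * hγ
  · have hb : j - E - M₀ - i ≠ 0 := fun h => hsub (M₀ + i) (by push_cast; linear_combination h)
    have ha : j + E + M₀ + i + 1 ≠ 0 := fun h =>
      hadd (-(M₀ + i + 1)) (by push_cast; linear_combination h)
    have hG : (G : ℂ) - i ≠ 0 := sub_ne_zero.2 (by exact_mod_cast hi.ne')
    have hi' : (i : ℂ) + 1 ≠ 0 := by exact_mod_cast i.succ_ne_zero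
    exact mul_ne_zero (neg_ne_zero.2 (mul_ne_zero hb hG)) (neg_ne_zero.2 (mul_ne_zero hi' ha))

lemma exists_hasCasimirAction_smul_weightKet (G : ℕ) {j E : ℂ} (M₀ : ℤ)
    (hsub : ∀ n : ℤ, j - E ≠ n) (hadd : ∀ n : ℤ, j + E ≠ n) :
    ∃ d : ℕ → ℂ, (∀ i ≤ G, d i ≠ 0) ∧
      HasCasimirAction (Qc G j E) (fun i => d i • weightKet G M₀ i) G
        ((E + gam G + M₀) * (E + gam G + M₀ + 1)) (j + E + M₀) (j - E - M₀) := by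
  obtain ⟨d, hd0, hd⟩ := exists_weightKet_rescaling G M₀ hsub hadd
  refine ⟨d, hd0, fun i hi => ?_⟩
  have hlower : (d i * (Cp (gam G) (gam G - i) * Cm j (E + M₀ + i))) • weightKet G M₀ (i - 1)
      = -(i * (j + E + M₀ + i)) • d (i - 1) • weightKet G M₀ (i - 1 : ℕ) := by
    rcases i with _ | i
    · simp [Cp_self]
    · rw [smul_smul]
      push_cast
      rw [← add_assoc, (hd i hi).2, add_sub_cancel_right]
      module
  have hraise : (d i * (Cp j (E + M₀ + i) * Cm (gam G) (gam G - i))) • weightKet G M₀ (i + 1)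
      = -((j - E - M₀ - i) * (G - i)) • d (i + 1) • weightKet G M₀ (i + 1 : ℕ) := by
    obtain rfl | hi := hi.eq_or_lt
    · simp [weightKet, ket_eq_zero]
    · rw [(hd i hi).1, smul_smul, Nat.cast_succ]
  rw [map_smul, Qc_weightKet]
  simp only [smul_add, Int.cast_natCast, smul_smul _ (_ * _ : ℂ), hlower, hraise]
  module

lemma qc_rev (G : ℕ) (j : ℂ) (k : Fin (G + 1)) :
    qc G j k.rev = -((j + gam G - k) * (j + gam G - k + 1)) := by
  rw [qc, muc, Fin.val_rev, Nat.add_sub_add_right, Nat.cast_sub k.is_le, natCast_eq_two_mul_gam G]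
  ring

lemma diagOn_Qc_VMc_iff (G : ℕ) {j E : ℂ} (M₀ : ℤ) (hsub : ∀ n : ℤ, j - E ≠ n)
    (hadd : ∀ n : ℤ, j + E ≠ n) :
    DiagOn (Qc G j E) (VMc G M₀) ↔ Function.Injective (qc G j) := by
  obtain ⟨d, hd0, hd⟩ := exists_hasCasimirAction_smul_weightKet G M₀ hsub hadd
  have hdk : ∀ k : Fin (G + 1), d k ≠ 0 := fun k => hd0 k k.is_le
  have hspan : VMc G M₀
      = Submodule.span ℂ (Set.range fun k : Fin (G + 1) => d k • weightKet G M₀ (k : ℕ)) := by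
    simp only [VMc_eq_span_weightKet, Submodule.span_range_eq_iSup,
      Submodule.span_singleton_smul_eq (hdk _).isUnit]
  have hli := (linearIndependent_weightKet G M₀).units_smul fun k => Units.mk0 (d k) (hdk k)
  rw [hspan, hd.diagOn_span_iff hli fun k _ h => hsub (M₀ + k) (by push_cast; linear_combination h),
    ← Fin.revPerm.injective_comp (qc G j)]
  refine iff_of_eq (congrArg Function.Injective (funext fun k => ?_))
  rw [Function.comp_apply, Fin.revPerm_apply, qc_rev, natCast_eq_two_mul_gam G]
  ring

lemma qc_eq_qc_iff {G : ℕ} {j : ℂ} {s t : Fin (G + 1)} :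
    qc G j s = qc G j t ↔ s = t ∨ 2 * j = ((G - 1 - s - t : ℤ) : ℂ) := by
  have hdiff : qc G j s - qc G j t = (t - s) * (2 * j - (G - 1 - s - t)) := by
    rw [qc, qc, muc, muc, natCast_eq_two_mul_gam G]
    ring
  rw [← sub_eq_zero, hdiff, mul_eq_zero, sub_eq_zero, sub_eq_zero, Nat.cast_inj, Fin.val_inj,
    eq_comm (a := t)]
  push_cast
  rfl

lemma injective_qc_iff {G : ℕ} {j : ℂ} :
    Function.Injective (qc G j) ↔ ∀ n : ℤ, 2 * j = n → (G : ℤ) - 2 < n ∨ n < -G := by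
  constructor
  · intro hinj n hn
    by_contra! hcon
    obtain ⟨s, t, hst, hne⟩ : ∃ s t : Fin (G + 1), (G : ℤ) - 1 - s - t = n ∧ s ≠ t := by
      rcases lt_or_ge n 0 with h0 | h0
      · exact ⟨Fin.last G, ⟨(-1 - n).toNat, by lia⟩, by simp; lia, by simp [Fin.ext_iff]; lia⟩
      · exact ⟨0, ⟨(G - 1 - n).toNat, by lia⟩, by simp; lia, by simp [Fin.ext_iff]; lia⟩
    exact hne (hinj (qc_eq_qc_iff.2 (Or.inr (by rw [hst, hn]))))
  · intro h s t hst
    rcases qc_eq_qc_iff.1 hst with rfl | hj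
    · rfl
    · have := h _ hj
      omega

theorem Qc_diagonalizable_iff_half_integer_general (G : ℕ) (j E : ℂ)
    (hsub : ∀ n : ℤ, j - E ≠ n) (hadd : ∀ n : ℤ, j + E ≠ n) :
    (∀ M₀ : ℤ, DiagOn (Qc G j E) (VMc G M₀) ↔
      ∀ n : ℤ, 2 * j = n → (G : ℤ) - 2 < n ∨ n < -G) ∧
    (DiagOn (Qc G j E) (⊤ : Submodule ℂ (Wc G)) ↔
      ∀ n : ℤ, 2 * j = n → (G : ℤ) - 2 < n ∨ n < -G) := by
  have hV : ∀ M₀ : ℤ, DiagOn (Qc G j E) (VMc G M₀) ↔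
      ∀ n : ℤ, 2 * j = n → (G : ℤ) - 2 < n ∨ n < -G := fun M₀ =>
    (diagOn_Qc_VMc_iff G M₀ hsub hadd).trans injective_qc_iff
  refine ⟨hV, ?_⟩
  simp only [diagOn_Qc_top_iff, hV, forall_const]

lemma forall_two_mul_ofReal_eq_iff (G : ℕ) {x : ℝ} (hx : ∃ n : ℤ, 2 * x = n) :
    (∀ n : ℤ, 2 * (x : ℂ) = n → (G : ℤ) - 2 < n ∨ n < -G) ↔
      (x > (G : ℝ) / 2 - 1 ∨ x < -((G : ℝ) / 2)) := by
  obtain ⟨n, hn⟩ := hx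
  have hnC : 2 * (x : ℂ) = n := by exact_mod_cast hn
  simp only [hnC, Int.cast_inj, forall_eq']
  rw [← Int.cast_lt (R := ℝ), ← Int.cast_lt (R := ℝ)]
  push_cast
  rw [← hn]
  exact or_congr ⟨fun h => by linarith, fun h => by linarith⟩
    ⟨fun h => by linarith, fun h => by linarith⟩

/-- For real j with 2j ∈ ℤ and j - ε ∉ ℤ, the restriction of 𝒬 to each V_M
is diagonalizable iff j > γ - 1 or j < -γ; consequently 𝒬 is diagonalizable on F_γ ⊗ C^ε_j
iff j > γ - 1 or j < -γ. -/
theorem Qc_diagonalizable_iff_half_integer (G : ℕ) (hG : 1 ≤ G) (Er jr : ℝ)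
    (hE : Er = 0 ∨ Er = 1 / 2)
    (hjZ : ∃ n : ℤ, 2 * jr = (n : ℝ)) (hje : ¬ ∃ n : ℤ, jr - Er = (n : ℝ)) :
    (∀ M₀ : ℤ,
      DiagOn (Qc G (jr : ℂ) (Er : ℂ)) (VMc G M₀) ↔
        (jr > (G : ℝ) / 2 - 1 ∨ jr < -((G : ℝ) / 2))) ∧
    (DiagOn (Qc G (jr : ℂ) (Er : ℂ)) (⊤ : Submodule ℂ (Wc G)) ↔
      (jr > (G : ℝ) / 2 - 1 ∨ jr < -((G : ℝ) / 2))) := by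
  have hadd : ¬ ∃ n : ℤ, jr + Er = n := by
    rintro ⟨n, hn⟩
    rcases hE with rfl | rfl
    · exact hje ⟨n, by linarith⟩
    · exact hje ⟨n - 1, by push_cast; linarith⟩
  rw [← forall_two_mul_ofReal_eq_iff G hjZ]
  exact Qc_diagonalizable_iff_half_integer_general G jr Er
    (fun n hn => hje ⟨n, by exact_mod_cast hn⟩) fun n hn => hadd ⟨n, by exact_mod_cast hn⟩

end
end

section
/- Let ρ_j and ρ_{j'} be standard-basis representations with labels j, j' and weight sets M_j, M_{j'}, let T be a tensor operator of rank γ from V_j to V_{j'}, let D(γ,j) ⊆ {j−γ, …, j+γ} be a finite set of labels with weight sets M_J, and let A(γ,μ;j,m|J,M) be complex coefficients that vanish unless M = m + μ and satisfy the recursion relations C_±(J,M) A(γ,μ;j,m|J,M±1) = C_±(γ,μ∓1) A(γ,μ∓1;j,m|J,M) + C_±(j,m∓1) A(γ,μ;j,m∓1|J,M). Define, for J ∈ D(γ,j) and M ∈ M_J, the vector ψ_{J,M} := Σ_{μ=−γ}^{γ} Σ_{m∈M_j} A(γ,μ;j,m|J,M) T_μ|j,m⟩ ∈ V_{j'} (a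 finite sum, since only terms with m = M − μ contribute; ψ_{J,M} := 0 for M ∉ M_J). Then J₀ψ_{J,M} = M ψ_{J,M} and J_± ψ_{J,M} = C_±(J,M) ψ_{J,M±1}. -/
/-!
`J₀`, `J₊` and `J₋` all act as `|m⟩ ↦ c(m) |m + δ⟩` with `δ = 0, 1, -1`, and for such an operator
the claim is one computation. The commutation relation turns `T_μ|m⟩` into
`d(μ) T_{μ+δ}|m⟩ + c(m) T_μ|m + δ⟩`; shifting the first part of the sum by `μ ↦ μ - δ` makes the
coefficient of `T_μ|M + δ - μ⟩` the right-hand side of the recursion relation. The shift loses no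
terms, because `T_μ` vanishes outside the range of `μ` at one end and the coefficients at the other.
For `J₀`, with `c(m) = m` and `d(μ) = μ`, the recursion is the identity `μ + (M - μ) = M`.
-/

/-!
Standard-basis representations of sl(2,ℝ), tensor operators, and Clebsch–Gordan data.

A standard-basis representation with label j and weight set S ⊆ ℂ is modelled on the space
`↥S →₀ ℂ`, with basis vector `single ⟨m,hm⟩ 1` representing |j,m⟩. Tensor operators of rank
γ = G/2 are indexed by z : ℤ (with μ = z - γ for z ∈ {0,...,G}), vanishing out of range.
-/

noncomputable section

/-- `S` is a standard weight set for the label `j`: finite-dimensional, positive discrete,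
negative discrete, or continuous class. -/
def IsStdWeightSet (j : ℂ) (S : Set ℂ) : Prop :=
  (∃ n : ℕ, 2 * j = (n : ℂ) ∧ S = {m : ℂ | ∃ z : ℕ, z ≤ n ∧ m = -j + (z : ℂ)}) ∨
  (∃ n : ℕ, 2 * j = (n : ℂ) - 1 ∧ S = {m : ℂ | ∃ z : ℕ, m = j + 1 + (z : ℂ)}) ∨
  (∃ n : ℕ, 2 * j = (n : ℂ) - 1 ∧ S = {m : ℂ | ∃ z : ℕ, m = -j - 1 - (z : ℂ)}) ∨
  (∃ ε : ℂ, (ε = 0 ∨ ε = 1 / 2) ∧ S = {m : ℂ | ∃ z : ℤ, m = ε + (z : ℂ)} ∧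
    ((∃ n : ℤ, 2 * j = (n : ℂ)) → ¬ ∃ n : ℤ, j - ε = (n : ℂ)))

/-- The representation space V_j attached to a weight set S. -/
abbrev RepSp (S : Set ℂ) := ↥S →₀ ℂ

/-- The basis vector |j,m⟩ scaled by c, with m ∉ S giving 0. -/
def bvec (S : Set ℂ) (m : ℂ) (c : ℂ) : RepSp S :=
  haveI := Classical.dec (m ∈ S)
  if h : m ∈ S then Finsupp.single (⟨m, h⟩ : ↥S) c else 0

/-- J₀ |j,m⟩ = m |j,m⟩. -/
def repJ0 (S : Set ℂ) : RepSp S →ₗ[ℂ] RepSp S :=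
  Finsupp.lsum ℂ fun m => LinearMap.toSpanSingleton ℂ (RepSp S)
    (Finsupp.single m (m : ℂ))

/-- J₊ |j,m⟩ = C₊(j,m) |j,m+1⟩ (zero if m+1 ∉ S). -/
def repJp (j : ℂ) (S : Set ℂ) : RepSp S →ₗ[ℂ] RepSp S :=
  Finsupp.lsum ℂ fun m => LinearMap.toSpanSingleton ℂ (RepSp S)
    (bvec S ((m : ℂ) + 1) (Cp j (m : ℂ)))

/-- J₋ |j,m⟩ = C₋(j,m) |j,m-1⟩ (zero if m-1 ∉ S). -/
def repJm (j : ℂ) (S : Set ℂ) : RepSp S →ₗ[ℂ] RepSp S :=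
  Finsupp.lsum ℂ fun m => LinearMap.toSpanSingleton ℂ (RepSp S)
    (bvec S ((m : ℂ) - 1) (Cm j (m : ℂ)))

/-- A tensor operator of rank γ = G/2 from the representation (j,S) to (j',S'):
a family T : ℤ → linear maps, T z being the component of index μ = z - γ, vanishing for
z ∉ {0,...,G}, satisfying [J₀,T_μ] = μ T_μ and [J_±,T_μ] = C_±(γ,μ) T_{μ±1}. -/
def IsTensorOp (G : ℕ) (j j' : ℂ) (S S' : Set ℂ)
    (T : ℤ → (RepSp S →ₗ[ℂ] RepSp S')) : Prop :=
  (∀ z : ℤ, (z < 0 ∨ (G : ℤ) < z) → T z = 0) ∧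
  (∀ z : ℤ, repJ0 S' ∘ₗ T z - T z ∘ₗ repJ0 S = ((z : ℂ) - (G : ℂ) / 2) • T z) ∧
  (∀ z : ℤ, repJp j' S' ∘ₗ T z - T z ∘ₗ repJp j S =
    Cp ((G : ℂ) / 2) ((z : ℂ) - (G : ℂ) / 2) • T (z + 1)) ∧
  (∀ z : ℤ, repJm j' S' ∘ₗ T z - T z ∘ₗ repJm j S =
    Cm ((G : ℂ) / 2) ((z : ℂ) - (G : ℂ) / 2) • T (z - 1))

/-- The label J = j + ν - γ of the ν-th summand in the decomposition of F_γ ⊗ ρ_j. -/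
def jlab (G : ℕ) (j : ℂ) (ν : Fin (G + 1)) : ℂ := j + ((ν : ℕ) : ℂ) - (G : ℂ) / 2

/-- μ = z - γ. -/
def mucz (G : ℕ) (z : ℤ) : ℂ := (z : ℂ) - (G : ℂ) / 2

/-- The vector ψ_{J,M} = Σ_{μ=-γ}^{γ} Σ_{m∈M_j} A(γ,μ;j,m|J,M) T_μ|j,m⟩; only the terms with
m = M - μ contribute, so the m-sum collapses (and the coefficients A vanish for M ∉ M_J,
making ψ_{J,M} = 0 in that case). -/
def psiJM (G : ℕ) (S S' : Set ℂ) (T : ℤ → (RepSp S →ₗ[ℂ] RepSp S'))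
    (A : ℤ → ℂ → Fin (G + 1) → ℂ → ℂ) (ν : Fin (G + 1)) (M : ℂ) : RepSp S' :=
  ∑ z ∈ Finset.range (G + 1),
    A (z : ℤ) (M - mucz G z) ν M • T (z : ℤ) (bvec S (M - mucz G z) 1)

section ShiftOperators

/-- The operator `|m⟩ ↦ c(m) |m + δ⟩` on the space with weight set `S`, where `|m + δ⟩` is `0` if
`m + δ ∉ S`. It is the common form of the actions of `J₀`, `J₊` and `J₋`. -/
def weightShift (S : Set ℂ) (δ : ℤ) (c : ℂ → ℂ) : RepSp S →ₗ[ℂ] RepSp S :=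
  Finsupp.lsum ℂ fun m => LinearMap.toSpanSingleton ℂ (RepSp S) (bvec S ((m : ℂ) + δ) (c m))

theorem repJ0_eq_weightShift (S : Set ℂ) : repJ0 S = weightShift S 0 id := by
  simp [repJ0, weightShift, bvec]

theorem repJp_eq_weightShift (j : ℂ) (S : Set ℂ) : repJp j S = weightShift S 1 (Cp j) := by
  simp [repJp, weightShift]

theorem repJm_eq_weightShift (j : ℂ) (S : Set ℂ) : repJm j S = weightShift S (-1) (Cm j) := by
  simp [repJm, weightShift, sub_eq_add_neg]

theorem bvec_eq_smul (S : Set ℂ) (m c : ℂ) : bvec S m c = c • bvec S m 1 := by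
  by_cases hm : m ∈ S <;> simp [bvec, hm]

theorem weightShift_bvec {S : Set ℂ} {m : ℂ} (hm : m ∈ S) (δ : ℤ) (c : ℂ → ℂ) :
    weightShift S δ c (bvec S m 1) = c m • bvec S (m + δ) 1 := by
  rw [← bvec_eq_smul]
  simp [weightShift, bvec, hm]

theorem apply_bvec_of_commutator_eq {W : Type*} [AddCommGroup W] [Module ℂ W] {S : Set ℂ}
    {δ : ℤ} {c : ℂ → ℂ} {d : ℂ} {K : W →ₗ[ℂ] W} {t t' : RepSp S →ₗ[ℂ] W}
    (hcomm : K ∘ₗ t - t ∘ₗ weightShift S δ c = d • t') {m : ℂ} (hm : m ∈ S) :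
    K (t (bvec S m 1)) = d • t' (bvec S m 1) + c m • t (bvec S (m + δ) 1) := by
  have h := LinearMap.congr_fun hcomm (bvec S m 1)
  simp only [LinearMap.sub_apply, LinearMap.comp_apply, LinearMap.smul_apply,
    weightShift_bvec hm, map_smul] at h
  exact sub_eq_iff_eq_add.mp h

end ShiftOperators

namespace IsTensorOp

variable {G : ℕ} {j j' : ℂ} {S S' : Set ℂ} {T : ℤ → (RepSp S →ₗ[ℂ] RepSp S')}

theorem eq_zero_of_notMem_Icc (hT : IsTensorOp G j j' S S' T) {z : ℤ}
    (hz : z ∉ Finset.Icc (0 : ℤ) G) : T z = 0 :=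
  hT.1 z (by rw [Finset.mem_Icc] at hz; omega)

theorem commutator_repJ0 (hT : IsTensorOp G j j' S S' T) (z : ℤ) :
    repJ0 S' ∘ₗ T z - T z ∘ₗ weightShift S 0 id = mucz G z • T (z + 0) := by
  rw [← repJ0_eq_weightShift, add_zero]
  exact hT.2.1 z

theorem commutator_repJp (hT : IsTensorOp G j j' S S' T) (z : ℤ) :
    repJp j' S' ∘ₗ T z - T z ∘ₗ weightShift S 1 (Cp j) =
      Cp ((G : ℂ) / 2) (mucz G z) • T (z + 1) := by
  rw [← repJp_eq_weightShift]
  exact hT.2.2.1 z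

theorem commutator_repJm (hT : IsTensorOp G j j' S S' T) (z : ℤ) :
    repJm j' S' ∘ₗ T z - T z ∘ₗ weightShift S (-1) (Cm j) =
      Cm ((G : ℂ) / 2) (mucz G z) • T (z + -1) := by
  rw [← repJm_eq_weightShift, ← sub_eq_add_neg]
  exact hT.2.2.2 z

end IsTensorOp

theorem sum_comp_equiv_eq_sum_of_eq_zero {ι E : Type*} [AddCommMonoid E] (e : ι ≃ ι)
    {s : Finset ι} {f : ι → E} (hf : ∀ i ∉ s, f i = 0) (hfe : ∀ i ∉ s, f (e i) = 0) :
    ∑ i ∈ s, f (e i) = ∑ i ∈ s, f i := by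
  rw [← finsum_eq_sum_of_support_subset f (Function.support_subset_iff'.mpr hf),
    ← finsum_eq_sum_of_support_subset (fun i => f (e i)) (Function.support_subset_iff'.mpr hfe)]
  exact finsum_comp_equiv e

theorem psiJM_eq_sum_Icc {G : ℕ} {S S' : Set ℂ} (T : ℤ → (RepSp S →ₗ[ℂ] RepSp S'))
    (A : ℤ → ℂ → Fin (G + 1) → ℂ → ℂ) (ν : Fin (G + 1)) (M : ℂ) :
    psiJM G S S' T A ν M = ∑ z ∈ Finset.Icc (0 : ℤ) G,
      A z (M - mucz G z) ν M • T z (bvec S (M - mucz G z) 1) := by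
  have hrange : Finset.Icc (0 : ℤ) G = (Finset.range (G + 1)).map Nat.castEmbedding := by
    ext z
    simp only [Finset.mem_Icc, Finset.mem_map, Finset.mem_range, Nat.castEmbedding_apply]
    exact ⟨fun h => ⟨z.toNat, by omega⟩, by omega⟩
  rw [hrange, Finset.sum_map]
  rfl

theorem sub_mucz_sub (G : ℕ) (M : ℂ) (z δ : ℤ) : M - mucz G (z - δ) = M + δ - mucz G z := by
  simp only [mucz, Int.cast_sub]
  ring

section CoupledVectors

variable {G : ℕ} {S S' : Set ℂ} {T : ℤ → (RepSp S →ₗ[ℂ] RepSp S')}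
  {A : ℤ → ℂ → Fin (G + 1) → ℂ → ℂ} {ν : Fin (G + 1)} {M : ℂ}

/-- The recursion relation is imposed at `m = M + δ - μ` alone, where it also holds for `J₀`. -/
theorem map_psiJM_of_commutator_of_recursion {δ : ℤ} {c : ℂ → ℂ} {d : ℤ → ℂ} {C : ℂ}
    {K : RepSp S' →ₗ[ℂ] RepSp S'}
    (hcomm : ∀ z, K ∘ₗ T z - T z ∘ₗ weightShift S δ c = d z • T (z + δ))
    (hT0 : ∀ z ∉ Finset.Icc (0 : ℤ) G, T z = 0)
    (hA0 : ∀ z ∉ Finset.Icc (0 : ℤ) G, ∀ m, A z m ν M = 0)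
    (hAS : ∀ z, ∀ m ∉ S, A z m ν M = 0)
    (hrec : ∀ z, C * A z (M + δ - mucz G z) ν (M + δ) =
      d (z - δ) * A (z - δ) (M + δ - mucz G z) ν M +
        c (M - mucz G z) * A z (M - mucz G z) ν M) :
    K (psiJM G S S' T A ν M) = C • psiJM G S S' T A ν (M + δ) := by
  let f : ℤ → RepSp S' := fun z =>
    (d (z - δ) * A (z - δ) (M + δ - mucz G z) ν M) • T z (bvec S (M + δ - mucz G z) 1)
  let g : ℤ → RepSp S' := fun z =>
    (c (M - mucz G z) * A z (M - mucz G z) ν M) • T z (bvec S (M + δ - mucz G z) 1)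
  have hf_add (z : ℤ) : f (z + δ) = (d z * A z (M - mucz G z) ν M) •
      T (z + δ) (bvec S (M - mucz G z) 1) := by
    simp only [f, ← sub_mucz_sub, add_sub_cancel_right]
  have hterm (z : ℤ) :
      K (A z (M - mucz G z) ν M • T z (bvec S (M - mucz G z) 1)) = f (z + δ) + g z := by
    rw [hf_add]
    by_cases hm : M - mucz G z ∈ S
    · rw [map_smul, apply_bvec_of_commutator_eq (hcomm z) hm, sub_add_eq_add_sub]
      module
    · simp [g, hAS z _ hm]
  have hshift : ∑ z ∈ Finset.Icc (0 : ℤ) G, f (z + δ) = ∑ z ∈ Finset.Icc (0 : ℤ) G, f z :=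
    sum_comp_equiv_eq_sum_of_eq_zero (Equiv.addRight δ)
      (fun z hz => by simp [f, hT0 z hz])
      (fun z hz => by simp [hf_add, hA0 z hz])
  calc K (psiJM G S S' T A ν M)
      = ∑ z ∈ Finset.Icc (0 : ℤ) G, (f (z + δ) + g z) := by
        simp only [psiJM_eq_sum_Icc, map_sum, hterm]
    _ = ∑ z ∈ Finset.Icc (0 : ℤ) G, (f z + g z) := by
        rw [Finset.sum_add_distrib, hshift, ← Finset.sum_add_distrib]
    _ = C • psiJM G S S' T A ν (M + δ) := by
        simp only [psiJM_eq_sum_Icc, Finset.smul_sum, smul_smul, hrec, add_smul, f, g]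

theorem psiJM_transforms_general {j j' J : ℂ} (hT : IsTensorOp G j j' S S' T)
    (hA0 : ∀ (z : ℤ) (m : ℂ), (z < 0 ∨ (G : ℤ) < z ∨ m ∉ S) → A z m ν M = 0)
    (hrecp : ∀ (z : ℤ) (m : ℂ), Cp J M * A z m ν (M + 1) =
      Cp ((G : ℂ) / 2) (mucz G (z - 1)) * A (z - 1) m ν M + Cp j (m - 1) * A z (m - 1) ν M)
    (hrecm : ∀ (z : ℤ) (m : ℂ), Cm J M * A z m ν (M - 1) =
      Cm ((G : ℂ) / 2) (mucz G (z + 1)) * A (z + 1) m ν M + Cm j (m + 1) * A z (m + 1) ν M) :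
    repJ0 S' (psiJM G S S' T A ν M) = M • psiJM G S S' T A ν M ∧
      repJp j' S' (psiJM G S S' T A ν M) = Cp J M • psiJM G S S' T A ν (M + 1) ∧
      repJm j' S' (psiJM G S S' T A ν M) = Cm J M • psiJM G S S' T A ν (M - 1) := by
  have hT0 (z : ℤ) (hz : z ∉ Finset.Icc (0 : ℤ) G) : T z = 0 := hT.eq_zero_of_notMem_Icc hz
  have hArange (z : ℤ) (hz : z ∉ Finset.Icc (0 : ℤ) G) (m : ℂ) : A z m ν M = 0 :=
    hA0 z m (by rw [Finset.mem_Icc] at hz; omega)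
  have hAS (z : ℤ) (m : ℂ) (hm : m ∉ S) : A z m ν M = 0 := hA0 z m (.inr (.inr hm))
  refine ⟨?_, ?_, ?_⟩
  · have h := map_psiJM_of_commutator_of_recursion (C := M) hT.commutator_repJ0 hT0 hArange hAS
      (fun z => by simp only [Int.cast_zero, add_zero, sub_zero, id]; ring)
    rwa [Int.cast_zero, add_zero] at h
  · have h := map_psiJM_of_commutator_of_recursion (C := Cp J M) hT.commutator_repJp hT0 hArange
      hAS (fun z => by
        have hm : M + 1 - mucz G z - 1 = M - mucz G z := by ring
        simpa only [Int.cast_one, hm] using hrecp z (M + 1 - mucz G z))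
    rwa [Int.cast_one] at h
  · have h := map_psiJM_of_commutator_of_recursion (C := Cm J M) hT.commutator_repJm hT0 hArange
      hAS (fun z => by
        have hm : M - 1 - mucz G z + 1 = M - mucz G z := by ring
        simpa only [Int.cast_neg, Int.cast_one, ← sub_eq_add_neg, sub_neg_eq_add, hm]
          using hrecm z (M - 1 - mucz G z))
    rwa [Int.cast_neg, Int.cast_one, ← sub_eq_add_neg] at h

end CoupledVectors

/-- For a tensor operator T and Clebsch–Gordan coefficients A satisfying
the vanishing conditions and the recursion relations, the vectors ψ_{J,M} satisfy
J₀ ψ_{J,M} = M ψ_{J,M} and J_± ψ_{J,M} = C_±(J,M) ψ_{J,M±1}. -/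
theorem psiJM_transforms (G : ℕ) (hG : 1 ≤ G) (j j' : ℂ) (S S' : Set ℂ)
    (hS : IsStdWeightSet j S) (hS' : IsStdWeightSet j' S')
    (T : ℤ → (RepSp S →ₗ[ℂ] RepSp S')) (hT : IsTensorOp G j j' S S' T)
    (D : Finset (Fin (G + 1))) (MJ : Fin (G + 1) → Set ℂ)
    (hMJ : ∀ ν ∈ D, IsStdWeightSet (jlab G j ν) (MJ ν))
    (A : ℤ → ℂ → Fin (G + 1) → ℂ → ℂ)
    (hA0 : ∀ (z : ℤ) (m : ℂ) (ν : Fin (G + 1)) (M : ℂ),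
      (z < 0 ∨ (G : ℤ) < z ∨ m ∉ S ∨ ν ∉ D ∨ M ∉ MJ ν ∨ M ≠ m + mucz G z) →
        A z m ν M = 0)
    (hrecp : ∀ ν ∈ D, ∀ (z : ℤ) (m M : ℂ),
      Cp (jlab G j ν) M * A z m ν (M + 1) =
        Cp ((G : ℂ) / 2) (mucz G (z - 1)) * A (z - 1) m ν M +
          Cp j (m - 1) * A z (m - 1) ν M)
    (hrecm : ∀ ν ∈ D, ∀ (z : ℤ) (m M : ℂ),
      Cm (jlab G j ν) M * A z m ν (M - 1) =
        Cm ((G : ℂ) / 2) (mucz G (z + 1)) * A (z + 1) m ν M +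
          Cm j (m + 1) * A z (m + 1) ν M) :
    ∀ ν ∈ D, ∀ M ∈ MJ ν,
      repJ0 S' (psiJM G S S' T A ν M) = M • psiJM G S S' T A ν M ∧
      repJp j' S' (psiJM G S S' T A ν M) =
        Cp (jlab G j ν) M • psiJM G S S' T A ν (M + 1) ∧
      repJm j' S' (psiJM G S S' T A ν M) =
        Cm (jlab G j ν) M • psiJM G S S' T A ν (M - 1) :=
  fun ν hν M _ => psiJM_transforms_general hT (fun z m h => hA0 z m ν M (by tauto))
    (fun z m => hrecp ν hν z m M) fun z m => hrecm ν hν z m M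

end
end

section
/- Let A be an n×n complex tridiagonal matrix (A_{ik} = 0 whenever |i−k| > 1) all of whose superdiagonal entries A_{i,i+1} are nonzero (or all of whose subdiagonal entries A_{i+1,i} are nonzero). Then A is diagonalizable if and only if A has n pairwise distinct eigenvalues. -/
/-!
Statement 15: a complex tridiagonal matrix with all superdiagonal (or all subdiagonal)
entries nonzero is diagonalizable iff it has n pairwise distinct eigenvalues.
Diagonalizability of A is expressed as: the eigenspaces of the associated endomorphism
span the whole space.
-/

/-!
Every eigenspace of `A` has dimension at most one. If the superdiagonal has no zero entry, then
row `i` of `(A - c) v = 0` determines the entry of `v` after `v i` from the preceding ones, so `v`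
is determined by its first entry. If the subdiagonal has no zero entry, this applies to `Aᵀ`, and
`A - c` and `Aᵀ - c` have kernels of the same dimension. An endomorphism whose eigenspaces are at
most one-dimensional is diagonalizable exactly when it has as many eigenvalues as the dimension of
the space.
-/

open Module Matrix

section Eigenspaces

variable {K V : Type*} [Field K] [AddCommGroup V] [Module K V] [FiniteDimensional K V]
  (f : End K V)

lemma finrank_eq_sum_finrank_eigenspace [Fintype f.Eigenvalues]
    (htop : ⨆ c, f.eigenspace c = ⊤) :
    finrank K V = ∑ c : f.Eigenvalues, finrank K (f.eigenspace c) := by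
  classical
  have hindep : iSupIndep fun c : f.Eigenvalues ↦ f.eigenspace c :=
    f.eigenspaces_iSupIndep.comp Subtype.val_injective
  have hsup : ⨆ c : f.Eigenvalues, f.eigenspace c = ⊤ :=
    (iSup_ne_bot_subtype f.eigenspace).trans htop
  have hint := DirectSum.isInternal_submodule_of_iSupIndep_of_iSup_eq_top hindep hsup
  rw [← (LinearEquiv.ofBijective (DirectSum.coeLinearMap _) hint).finrank_eq, finrank_directSum]

lemma iSup_eigenspace_eq_top_of_card_eq_finrank_s15 {s : Finset K} (hcard : s.card = finrank K V)
    (hs : ∀ c ∈ s, f.HasEigenvalue c) : ⨆ c, f.eigenspace c = ⊤ := by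
  choose v hv using fun c : s ↦ (hs c c.2).exists_hasEigenvector
  have hli : LinearIndependent K v :=
    f.eigenvectors_linearIndependent' (fun c : s ↦ (c : K)) Subtype.val_injective v hv
  have hspan : Submodule.span K (Set.range v) = ⊤ :=
    hli.span_eq_top_of_card_eq_finrank' (by rw [Fintype.card_coe, hcard])
  rw [eq_top_iff, ← hspan, Submodule.span_le, Set.range_subset_iff]
  exact fun c ↦ Submodule.mem_iSup_of_mem (c : K) (hv c).1

theorem iSup_eigenspace_eq_top_iff_of_finrank_le_one
    (hdim : ∀ c, finrank K (f.eigenspace c) ≤ 1) :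
    ⨆ c, f.eigenspace c = ⊤ ↔
      ∃ s : Finset K, s.card = finrank K V ∧ ∀ c ∈ s, f.HasEigenvalue c := by
  refine ⟨fun htop ↦ ?_, fun ⟨s, hcard, hs⟩ ↦
    iSup_eigenspace_eq_top_of_card_eq_finrank_s15 f hcard hs⟩
  have : Fintype f.Eigenvalues := f.finite_hasEigenvalue.fintype
  have hle : finrank K V ≤ Fintype.card f.Eigenvalues := calc
    finrank K V = ∑ c : f.Eigenvalues, finrank K (f.eigenspace c) :=
      finrank_eq_sum_finrank_eigenspace f htop
    _ ≤ ∑ _c : f.Eigenvalues, 1 := Finset.sum_le_sum fun c _ ↦ hdim c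
    _ = Fintype.card f.Eigenvalues := Fintype.card_eq_sum_ones.symm
  obtain ⟨t, -, hcard⟩ := Finset.exists_subset_card_eq hle
  refine ⟨t.map ⟨End.Eigenvalues.val f, Subtype.val_injective⟩, by rw [Finset.card_map, hcard], ?_⟩
  exact (Finset.forall_mem_map (p := fun c _ ↦ f.HasEigenvalue c)).mpr fun c _ ↦ c.2

end Eigenspaces

lemma finrank_ker_mulVecLin_transpose {ι K : Type*} [Fintype ι] [Field K] (A : Matrix ι ι K) :
    finrank K (LinearMap.ker Aᵀ.mulVecLin) = finrank K (LinearMap.ker A.mulVecLin) := by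
  have hrank : finrank K (LinearMap.range Aᵀ.mulVecLin) = finrank K (LinearMap.range A.mulVecLin) :=
    A.rank_transpose
  have hA := A.mulVecLin.finrank_range_add_finrank_ker
  have hAt := Aᵀ.mulVecLin.finrank_range_add_finrank_ker
  omega

lemma eigenspace_toLin'_eq_ker {ι R : Type*} [Fintype ι] [DecidableEq ι] [CommRing R]
    (A : Matrix ι ι R) (c : R) :
    End.eigenspace (toLin' A) c = LinearMap.ker (A - diagonal fun _ ↦ c).mulVecLin := by
  ext v
  rw [End.mem_eigenspace_iff, toLin'_apply, LinearMap.mem_ker, mulVecLin_apply, sub_mulVec,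
    sub_eq_zero, ← smul_one_eq_diagonal, smul_mulVec, one_mulVec]

/-- A square matrix is unreduced lower Hessenberg if it vanishes above the superdiagonal and has no
zero entry on the superdiagonal. The rows and columns are indexed by a linear order, so that
superdiagonal positions are the pairs `i ⋖ k`, and positions above them are the pairs with an index
strictly in between. -/
structure IsUnreducedLowerHessenberg {ι R : Type*} [LinearOrder ι] [Zero R]
    (A : Matrix ι ι R) : Prop where
  eq_zero : ∀ ⦃i j k⦄, i < j → j < k → A i k = 0
  ne_zero : ∀ ⦃i k⦄, i ⋖ k → A i k ≠ 0

lemma isUnreducedLowerHessenberg_fin {n : ℕ} {R : Type*} [Zero R] {A : Matrix (Fin n) (Fin n) R}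
    (hzero : ∀ i k : Fin n, (i : ℕ) + 1 < k → A i k = 0)
    (hne : ∀ i k : Fin n, (k : ℕ) = i + 1 → A i k ≠ 0) : IsUnreducedLowerHessenberg A where
  eq_zero i j k hij hjk := hzero i k (by omega)
  ne_zero i k hik := hne i k (Nat.covBy_iff_add_one_eq.mp (Fin.covBy_iff.mp hik)).symm

namespace IsUnreducedLowerHessenberg

variable {ι : Type*} [LinearOrder ι]

lemma sub_diagonal {R : Type*} [AddGroup R] {A : Matrix ι ι R}
    (hA : IsUnreducedLowerHessenberg A) (d : ι → R) :
    IsUnreducedLowerHessenberg (A - diagonal d) where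
  eq_zero i j k hij hjk := by
    rw [Matrix.sub_apply, diagonal_apply_ne d (hij.trans hjk).ne, sub_zero, hA.eq_zero hij hjk]
  ne_zero i k hik := by
    rw [Matrix.sub_apply, diagonal_apply_ne d hik.ne, sub_zero]
    exact hA.ne_zero hik

variable [Fintype ι]

lemma eq_zero_of_mulVec_eq_zero {R : Type*} [NonUnitalNonAssocSemiring R] [NoZeroDivisors R]
    {A : Matrix ι ι R} (hA : IsUnreducedLowerHessenberg A) {b : ι} (hb : IsBot b) {v : ι → R}
    (hv : A *ᵥ v = 0) (hvb : v b = 0) : v = 0 := by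
  funext i
  induction i using WellFoundedLT.induction with
  | ind i ih =>
    obtain rfl | hbi := (hb i).eq_or_lt
    · exact hvb
    obtain ⟨j, -, hji⟩ := exists_le_covBy_of_lt hbi
    have hrow : A j i * v i = 0 := calc
      A j i * v i = ∑ k, A j k * v k := by
        refine (Fintype.sum_eq_single (f := fun k ↦ A j k * v k) i fun k hk ↦ ?_).symm
        obtain hki | hik := hk.lt_or_gt
        · rw [ih k hki, Pi.zero_apply, mul_zero]
        · rw [hA.eq_zero hji.lt hik, zero_mul]
      _ = 0 := congrFun hv j
    exact (mul_eq_zero.mp hrow).resolve_left (hA.ne_zero hji)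

variable {K : Type*} [Field K] {A : Matrix ι ι K}

lemma finrank_ker_le_one (hA : IsUnreducedLowerHessenberg A) :
    finrank K (LinearMap.ker A.mulVecLin) ≤ 1 := by
  cases isEmpty_or_nonempty ι
  · rw [finrank_zero_of_subsingleton]
    exact zero_le_one
  obtain ⟨b, hb⟩ : ∃ b : ι, IsBot b := Finite.exists_min id
  let coordinate : LinearMap.ker A.mulVecLin →ₗ[K] K :=
    LinearMap.proj b ∘ₗ (LinearMap.ker A.mulVecLin).subtype
  have hinj : Function.Injective coordinate := (injective_iff_map_eq_zero coordinate).mpr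
    fun v hvb ↦ Subtype.ext (hA.eq_zero_of_mulVec_eq_zero hb v.2 hvb)
  exact (LinearMap.finrank_le_finrank_of_injective hinj).trans_eq (finrank_self K)

lemma finrank_eigenspace_le_one (hA : IsUnreducedLowerHessenberg A) (c : K) :
    finrank K (End.eigenspace (toLin' A) c) ≤ 1 := by
  rw [eigenspace_toLin'_eq_ker]
  exact (hA.sub_diagonal _).finrank_ker_le_one

lemma finrank_eigenspace_le_one_of_transpose (hA : IsUnreducedLowerHessenberg Aᵀ) (c : K) :
    finrank K (End.eigenspace (toLin' A) c) ≤ 1 := by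
  rw [eigenspace_toLin'_eq_ker, ← finrank_ker_mulVecLin_transpose, transpose_sub,
    diagonal_transpose]
  exact (hA.sub_diagonal _).finrank_ker_le_one

end IsUnreducedLowerHessenberg

theorem tridiagonal_diagonalizable_iff_general {ι K : Type*} [Fintype ι] [LinearOrder ι] [Field K]
    {A : Matrix ι ι K} (hA : IsUnreducedLowerHessenberg A ∨ IsUnreducedLowerHessenberg Aᵀ) :
    ⨆ c, End.eigenspace (toLin' A) c = ⊤ ↔
      ∃ s : Finset K, s.card = Fintype.card ι ∧ ∀ c ∈ s, End.HasEigenvalue (toLin' A) c := by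
  rw [← finrank_fintype_fun_eq_card K]
  exact iSup_eigenspace_eq_top_iff_of_finrank_le_one _ fun c ↦
    hA.elim (·.finrank_eigenspace_le_one c) (·.finrank_eigenspace_le_one_of_transpose c)

/-- Let A be an n×n complex tridiagonal matrix all of whose superdiagonal
entries are nonzero, or all of whose subdiagonal entries are nonzero. Then A is
diagonalizable if and only if A has n pairwise distinct eigenvalues. -/
theorem tridiagonal_diagonalizable_iff (n : ℕ) (hn : 1 ≤ n)
    (A : Matrix (Fin n) (Fin n) ℂ)
    (htri : ∀ i k : Fin n, ((i : ℕ) + 1 < (k : ℕ) ∨ (k : ℕ) + 1 < (i : ℕ)) → A i k = 0)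
    (hside : (∀ i k : Fin n, (k : ℕ) = (i : ℕ) + 1 → A i k ≠ 0) ∨
             (∀ i k : Fin n, (i : ℕ) = (k : ℕ) + 1 → A i k ≠ 0)) :
    (⨆ c : ℂ, Module.End.eigenspace (Matrix.toLin' A) c) = ⊤ ↔
      ∃ s : Finset ℂ, s.card = n ∧
        ∀ c ∈ s, Module.End.HasEigenvalue (Matrix.toLin' A) c := by
  simpa only [Fintype.card_fin] using tridiagonal_diagonalizable_iff_general <| hside.imp
    (isUnreducedLowerHessenberg_fin fun i k h ↦ htri i k (.inl h))
    (fun hsub ↦ isUnreducedLowerHessenberg_fin (fun i k h ↦ htri k i (.inr h)) fun i k ↦ hsub k i)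
end
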